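/- First inclusion in the proof of Proposition 3 (formal version): for every k ≥ 1, (J(f)·A)^{2k} ⊆ s^k·A + M, where J(f)·A denotes the ideal of A generated by ∂₁(f),…,∂ₙ(f). Equivalently, the image in H = A/M of the ideal generated by all products of 2k partial derivatives of f is contained in s^k·H. -/

import Mathlib

noncomputable section

open scoped Pointwise

/-- The formal partial derivative `∂ᵢ` with respect to the `i`th variable, determined by
`coeff α (∂ᵢ g) = (α i + 1) • coeff (α + eᵢ) g`. -/
def pd {σ : Type*} (i : σ) (g : MvPowerSeries σ ℂ) : MvPowerSeries σ ℂ :=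
  fun α => ((α i : ℂ) + 1) * MvPowerSeries.coeff (α + Finsupp.single i 1) g

lemma coeff_pd {σ : Type*} (i : σ) (g : MvPowerSeries σ ℂ) (α : σ →₀ ℕ) :
    MvPowerSeries.coeff α (pd i g) =
      ((α i : ℂ) + 1) * MvPowerSeries.coeff (α + Finsupp.single i 1) g := rfl

variable (n : ℕ)

/-- `R = ℂ[[x₁,…,xₙ]]`. -/
abbrev R' := MvPowerSeries (Fin n) ℂ

/-- `A = ℂ[[s,x₁,…,xₙ]]`, where `s` is the 0th variable and `xᵢ` is the variable
of index `i` (`1 ≤ i ≤ n`). -/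
abbrev A' := MvPowerSeries (Fin (n + 1)) ℂ

/-- The variable `s` of `A`. -/
def sv : A' n := MvPowerSeries.X 0

/-- Forget the `s`-exponent of a multi-index of `A`. -/
def tailF (β : Fin (n + 1) →₀ ℕ) : Fin n →₀ ℕ :=
  Finsupp.equivFunOnFinite.symm fun i => β i.succ

/-- The inclusion `R ⊆ A` as the subring of series not involving `s`. -/
def inclR (g : R' n) : A' n :=
  fun β => if β 0 = 0 then MvPowerSeries.coeff (tailF n β) g else 0

/-- The inclusion `ℂ[[s]] ⊆ A` as the subring of series in `s` alone. -/
def toA (p : PowerSeries ℂ) : A' n :=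
  fun β => if tailF n β = 0 then PowerSeries.coeff (β 0) p else 0

lemma coeff_inclR (g : R' n) (β : Fin (n + 1) →₀ ℕ) :
    MvPowerSeries.coeff β (inclR n g) =
      if β 0 = 0 then MvPowerSeries.coeff (tailF n β) g else 0 := rfl

/-- The `ℂ[[s]]`-linear operator `Fᵢ(g) = ∂ᵢ(f)·g − s·∂ᵢ(g)` on `A`. -/
def FF (f : R' n) (i : Fin n) (g : A' n) : A' n :=
  inclR n (pd i f) * g - sv n * pd i.succ g

/-- `M = range F₁ + ⋯ + range Fₙ`, so that `H = A/M` is the formal Brieskorn lattice. -/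
def Mset (f : R' n) : Set (A' n) :=
  {a | ∃ q : Fin n → A' n, a = ∑ i, FF n f i (q i)}

/-- The Jacobian ideal `J(f) = ⟨∂₁f,…,∂ₙf⟩` of `R`. -/
def Jf (f : R' n) : Ideal (R' n) :=
  Ideal.span (Set.range fun i : Fin n => pd i f)

/-- The maximal ideal `⟨x₁,…,xₙ⟩` of `R = ℂ[[x₁,…,xₙ]]`. -/
def mx : Ideal (R' n) :=
  Ideal.span (Set.range (MvPowerSeries.X : Fin n → R' n))

/-- The ideal `J(f)·A` of `A` generated by `∂₁(f),…,∂ₙ(f)`. -/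
def JA (f : R' n) : Ideal (A' n) :=
  Ideal.span (Set.range fun i : Fin n => inclR n (pd i f))

/-- The ideal `⟨x₁,…,xₙ⟩·A` of `A` generated by the variables `x₁,…,xₙ` (not `s`). -/
def XA : Ideal (A' n) :=
  Ideal.span (Set.range fun i : Fin n => (MvPowerSeries.X i.succ : A' n))

lemma pd_add {σ : Type*} (i : σ) (a b : MvPowerSeries σ ℂ) :
    pd i (a + b) = pd i a + pd i b := by
  ext α; simp [coeff_pd, mul_add]

lemma pd_smul {σ : Type*} (i : σ) (c : ℂ) (a : MvPowerSeries σ ℂ) :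
    pd i (c • a) = c • pd i a := by
  ext α; simp [coeff_pd]; ring

lemma FF_add (f : R' n) (i : Fin n) (a b : A' n) :
    FF n f i (a + b) = FF n f i a + FF n f i b := by
  simp only [FF, pd_add, mul_add]; ring

lemma FF_smul (f : R' n) (i : Fin n) (c : ℂ) (a : A' n) :
    FF n f i (c • a) = c • FF n f i a := by
  simp only [FF, pd_smul, Algebra.mul_smul_comm, smul_sub]

lemma FF_zero (f : R' n) (i : Fin n) : FF n f i 0 = 0 := by
  simpa using FF_smul n f i 0 0

/-- `M` as a `ℂ`-submodule of `A`. -/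
def Msub (f : R' n) : Submodule ℂ (A' n) where
  carrier := Mset n f
  zero_mem' := ⟨0, by simp [FF_zero]⟩
  add_mem' := by
    rintro a b ⟨q, rfl⟩ ⟨q', rfl⟩
    exact ⟨q + q', by simp [FF_add, Finset.sum_add_distrib]⟩
  smul_mem' := by
    rintro c a ⟨q, rfl⟩
    exact ⟨c • q, by simp [FF_smul, Finset.smul_sum]⟩

/-- The inclusion `R ⊆ A` as a `ℂ`-linear map. -/
def inclL : R' n →ₗ[ℂ] A' n where
  toFun := inclR n
  map_add' a b := by
    ext β; simp only [coeff_inclR, map_add]; split <;> simp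
  map_smul' c a := by
    ext β; simp only [coeff_inclR, map_smul, RingHom.id_apply]; split <;> simp

/-!
Write `v = (∂₁f,…,∂ₙf)` and `I = J(f)·A`. Summing the maps `Fᵢ` gives
`T(q) = ∑ vᵢqᵢ - s·∑ ∂ᵢqᵢ`, so that `M = range T` and, modulo `M`, a combination `∑ vᵢqᵢ` may be
replaced by `s·∑ ∂ᵢqᵢ`. If `∑ vᵢqᵢ ∈ I^(2k+2)`, then the `qᵢ` can be taken in `I^(2k+1)`; by the
Leibniz rule a derivative lowers the `I`-adic order by at most one, so `∑ ∂ᵢqᵢ ∈ I^(2k)`.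
Hence two powers of `I` buy one power of `s`, and induction on `k` concludes.
-/

section Derivation

variable {R A : Type*} [CommSemiring R]

lemma derivation_mem_pow_smul_top {M : Type*} [CommSemiring A] [Algebra R A] [AddCommMonoid M]
    [Module A M] [Module R M] (D : Derivation R A M) (I : Ideal A) {k : ℕ} {a : A}
    (ha : a ∈ I ^ (k + 1)) : D a ∈ I ^ k • (⊤ : Submodule A M) := by
  induction k generalizing a with
  | zero => simp
  | succ k ih =>
    rw [pow_succ] at ha
    induction ha using Submodule.mul_induction_on' with
    | mem_mul_mem x hx y hy =>
      rw [D.leibniz]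
      refine add_mem (Submodule.smul_mem_smul hx Submodule.mem_top) ?_
      rw [pow_succ', mul_smul]
      exact Submodule.smul_mem_smul hy (ih hx)
    | add x _ y _ hx hy =>
      rw [map_add]
      exact add_mem hx hy

variable [CommRing A] [Algebra R A] {ι : Type*} [Fintype ι]

/-- The twisted divergence `q ↦ v · q - s div q` of a vector field `q`, where `div q = ∑ Dᵢqᵢ`.
For `A = ℂ[[s,x₁,…,xₙ]]`, `Dᵢ = ∂ᵢ` and `v = (∂₁f,…,∂ₙf)` its range is the submodule `M` defining
the formal Brieskorn lattice of `f`. -/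
def twistedDivergence (D : ι → Derivation R A A) (s : A) (v : ι → A) : (ι → A) →ₗ[R] A :=
  ∑ i, (LinearMap.mulLeft R (v i) - LinearMap.mulLeft R s ∘ₗ (D i).toLinearMap) ∘ₗ
    LinearMap.proj i

lemma twistedDivergence_apply (D : ι → Derivation R A A) (s : A) (v q : ι → A) :
    twistedDivergence D s v q = ∑ i, v i * q i - s * ∑ i, D i (q i) := by
  simp [twistedDivergence, Finset.mul_sum]

lemma twistedDivergence_smul {D : ι → Derivation R A A} {s c : A} (hc : ∀ i, D i c = 0)
    (v q : ι → A) : twistedDivergence D s v (c • q) = c * twistedDivergence D s v q := by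
  have hD (i : ι) : D i (c * q i) = c * D i (q i) := by simp [hc]
  simp only [twistedDivergence_apply, Pi.smul_apply, smul_eq_mul, hD, mul_left_comm _ c,
    ← Finset.mul_sum, mul_sub]

lemma exists_eq_twistedDivergence_add_mul (D : ι → Derivation R A A) (s : A) (v : ι → A) {k : ℕ}
    {a : A} (ha : a ∈ Ideal.span (Set.range v) ^ (k + 2)) :
    ∃ q : ι → A, ∃ b ∈ Ideal.span (Set.range v) ^ k, a = twistedDivergence D s v q + s * b := by
  rw [pow_succ, ← smul_eq_mul, Ideal.span, Submodule.mem_ideal_smul_span_iff_exists_sum] at ha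
  obtain ⟨q, hq, rfl⟩ := ha
  refine ⟨q, ∑ i, D i (q i), sum_mem fun i _ ↦ ?_, ?_⟩
  · simpa only [smul_eq_mul, Ideal.mul_top] using derivation_mem_pow_smul_top (D i) _ (hq i)
  · rw [twistedDivergence_apply, sub_add_cancel, Finsupp.sum_fintype _ _ (by simp)]
    simp only [smul_eq_mul, mul_comm]

theorem brieskorn_first_inclusion_general (D : ι → Derivation R A A) {s : A}
    (hs : ∀ i, D i s = 0) (v : ι → A) (k : ℕ) :
    ((Ideal.span (Set.range v) ^ (2 * k) : Ideal A) : Set A) ⊆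
      (Ideal.span {s ^ k} : Ideal A) + Set.range (twistedDivergence D s v) := by
  induction k with
  | zero => exact fun a _ ↦ ⟨a, by simp, 0, ⟨0, map_zero _⟩, add_zero a⟩
  | succ k ih =>
    intro a ha
    obtain ⟨q, b, hb, rfl⟩ := exists_eq_twistedDivergence_add_mul D s v ha
    obtain ⟨_, hc, _, ⟨p, rfl⟩, rfl⟩ := ih hb
    obtain ⟨c, rfl⟩ := Ideal.mem_span_singleton.mp hc
    refine ⟨s ^ (k + 1) * c, Ideal.mul_mem_right c _ (Ideal.mem_span_singleton_self _),
      _, ⟨q + s • p, rfl⟩, ?_⟩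
    simp only [map_add, twistedDivergence_smul hs]
    ring

end Derivation

lemma pd_eq_pderiv {σ : Type*} (i : σ) (g : MvPowerSeries σ ℂ) :
    pd i g = MvPowerSeries.pderiv ℂ i g := by
  ext α
  rw [coeff_pd, MvPowerSeries.coeff_pderiv, mul_comm]

lemma pderiv_succ_sv (i : Fin n) : MvPowerSeries.pderiv ℂ i.succ (sv n) = 0 :=
  MvPowerSeries.pderiv_X_of_ne (Fin.succ_ne_zero i).symm

lemma Mset_eq_range_twistedDivergence (f : R' n) :
    Mset n f = Set.range (twistedDivergence (fun i ↦ MvPowerSeries.pderiv ℂ i.succ) (sv n)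
      fun i ↦ inclR n (pd i f)) := by
  ext a
  simp only [Mset, FF, pd_eq_pderiv, Set.mem_ofPred_eq, Set.mem_range, twistedDivergence_apply,
    Finset.sum_sub_distrib, Finset.mul_sum, eq_comm]

/-- **First inclusion in the proof of Proposition 3 (formal version)**: for every
`k ≥ 1`, `(J(f)·A)^{2k} ⊆ s^k·A + M`. -/
theorem brieskorn_first_inclusion (n : ℕ) (hn : 1 ≤ n) (f : R' n)
    (hf0 : MvPowerSeries.constantCoeff f = 0)
    (m : ℕ) (hm : 1 ≤ m) (hiso : mx n ^ m ≤ Jf n f) :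
    ∀ k : ℕ, 1 ≤ k →
      ((JA n f ^ (2 * k) : Ideal (A' n)) : Set (A' n)) ⊆
        ((Ideal.span {sv n ^ k} : Ideal (A' n)) : Set (A' n)) + Mset n f := by
  intro k _
  rw [Mset_eq_range_twistedDivergence]
  exact brieskorn_first_inclusion_general _ (pderiv_succ_sv n) _ k
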